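/- Let Ω ⊆ ℂ be open, let h_T, h_S : Ω → M_n(ℂ) be smooth functions with invertible values, let A : Ω → M_n(ℂ) be anti-holomorphic with invertible values and B : Ω → M_n(ℂ) holomorphic with invertible values, and suppose h_S(λ) = A(λ) h_T(λ) B(λ) for all λ ∈ Ω. Define the curvature 𝒦_h := −∂/∂λ̄ ( h^{-1} ∂h/∂λ ), and define covariant partial derivatives of an M_n(ℂ)-valued function 𝒦 with respect to a metric h recursively by 𝒦_{,λ̄} := ∂𝒦/∂λ̄ and 𝒦_{,λ} := ∂𝒦/∂λ + [h^{-1} ∂h/∂λ, 𝒦] (commutator bracket), and set 𝒦_{h, λ^i λ̄^j} to be the result of applying i covariant λ-derivatives followed by j λ̄-derivatives to 𝒦_h. Then for all i, j ≥ 1, B(λ) 𝒦_{h_S, λ^i λ̄^j}(λ) = 𝒦_{h_T, λ^i λ̄^j}(λ) B(λ) for every λ ∈ Ω, where the covariant derivatives for h_S are taken with respect to h_S and those for h_T with respect to h_T. -/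

import Mathlib

/-!
Write `θ_h = h⁻¹ ∂h`. From `h_S = A h_T B` with `∂A = 0` the product rule gives the gauge
transformation law `B θ_S = θ_T B + ∂B` (`conn_transform`). Applying `∂̄` and using
`∂̄B = 0` and `∂̄∂B = 0` yields `B 𝒦_S = 𝒦_T B`. If smooth `F`, `G` satisfy `B F = G B` on `Ω`, then
the inhomogeneous term `∂B` in the transformation law cancels the terms created by differentiating
`B`, so `B (F_{,λ}) = (G_{,λ}) B` (`covLam_intertwine`); and `B (∂̄F) = (∂̄G) B` because `B` is
holomorphic (`covBar_intertwine`). The claim follows by induction on the number of derivatives,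
smoothness being carried along so that the product rule applies at every stage.
-/

open Matrix

/-- The Wirtinger derivative `∂f/∂λ = (∂f/∂x - i ∂f/∂y)/2` of `f : ℂ → ℂ` at `z`. -/
noncomputable def wd (f : ℂ → ℂ) (z : ℂ) : ℂ :=
  (1 / 2) * (fderiv ℝ f z 1 - Complex.I * fderiv ℝ f z Complex.I)

/-- The conjugate Wirtinger derivative `∂f/∂λ̄ = (∂f/∂x + i ∂f/∂y)/2` of `f : ℂ → ℂ` at `z`. -/
noncomputable def wdbar (f : ℂ → ℂ) (z : ℂ) : ℂ :=
  (1 / 2) * (fderiv ℝ f z 1 + Complex.I * fderiv ℝ f z Complex.I)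

/-- The entrywise Wirtinger derivative `∂F/∂λ` of a matrix-valued function. -/
noncomputable def mwd {n : ℕ} (F : ℂ → Matrix (Fin n) (Fin n) ℂ) (z : ℂ) :
    Matrix (Fin n) (Fin n) ℂ :=
  Matrix.of fun i j => wd (fun w => F w i j) z

/-- The entrywise conjugate Wirtinger derivative `∂F/∂λ̄` of a matrix-valued function. -/
noncomputable def mwdbar {n : ℕ} (F : ℂ → Matrix (Fin n) (Fin n) ℂ) (z : ℂ) :
    Matrix (Fin n) (Fin n) ℂ :=
  Matrix.of fun i j => wdbar (fun w => F w i j) z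

/-- The curvature `𝒦_h = −∂/∂λ̄ (h⁻¹ ∂h/∂λ)` of a metric `h`. -/
noncomputable def curvature {n : ℕ} (h : ℂ → Matrix (Fin n) (Fin n) ℂ) (z : ℂ) :
    Matrix (Fin n) (Fin n) ℂ :=
  - mwdbar (fun w => (h w)⁻¹ * mwd h w) z

/-- The covariant `λ`-derivative with respect to the metric `h`:
`𝒦_{,λ} = ∂𝒦/∂λ + [h⁻¹ ∂h/∂λ, 𝒦]`. -/
noncomputable def covLam {n : ℕ} (h : ℂ → Matrix (Fin n) (Fin n) ℂ)
    (F : ℂ → Matrix (Fin n) (Fin n) ℂ) : ℂ → Matrix (Fin n) (Fin n) ℂ :=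
  fun z => mwd F z + (((h z)⁻¹ * mwd h z) * F z - F z * ((h z)⁻¹ * mwd h z))

/-- The covariant `λ̄`-derivative: `𝒦_{,λ̄} = ∂𝒦/∂λ̄`. -/
noncomputable def covBar {n : ℕ} (F : ℂ → Matrix (Fin n) (Fin n) ℂ) :
    ℂ → Matrix (Fin n) (Fin n) ℂ :=
  fun z => mwdbar F z

/-- The covariant partial derivative `𝒦_{h, λ^i λ̄^j}` of the curvature of the metric `h`:
`i` covariant `λ`-derivatives followed by `j` `λ̄`-derivatives applied to `𝒦_h`. -/
noncomputable def covDeriv {n : ℕ} (h : ℂ → Matrix (Fin n) (Fin n) ℂ) (i j : ℕ) :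
    ℂ → Matrix (Fin n) (Fin n) ℂ :=
  covBar^[j] ((covLam h)^[i] (curvature h))

/-- Entrywise real smoothness of a matrix-valued function on `Ω`. -/
def MSmooth {n : ℕ} (Ω : Set ℂ) (F : ℂ → Matrix (Fin n) (Fin n) ℂ) : Prop :=
  ∀ i j, ContDiffOn ℝ (⊤ : ℕ∞) (fun z => F z i j) Ω

/-! ### Wirtinger derivatives of scalar functions -/

section Scalar

variable {Ω : Set ℂ} {z : ℂ} {f g : ℂ → ℂ}

lemma wd_mul (hf : DifferentiableAt ℝ f z) (hg : DifferentiableAt ℝ g z) :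
    wd (fun w => f w * g w) z = wd f z * g z + f z * wd g z := by
  simp only [wd, fderiv_fun_mul hf hg, _root_.add_apply, _root_.smul_apply, smul_eq_mul]
  ring

lemma wdbar_mul (hf : DifferentiableAt ℝ f z) (hg : DifferentiableAt ℝ g z) :
    wdbar (fun w => f w * g w) z = wdbar f z * g z + f z * wdbar g z := by
  simp only [wdbar, fderiv_fun_mul hf hg, _root_.add_apply, _root_.smul_apply, smul_eq_mul]
  ring

lemma wdbar_add (hf : DifferentiableAt ℝ f z) (hg : DifferentiableAt ℝ g z) :
    wdbar (fun w => f w + g w) z = wdbar f z + wdbar g z := by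
  simp only [wdbar, fderiv_fun_add hf hg, _root_.add_apply]
  ring

lemma wd_sum {ι : Type*} (s : Finset ι) {f : ι → ℂ → ℂ}
    (hf : ∀ i ∈ s, DifferentiableAt ℝ (f i) z) :
    wd (fun w => ∑ i ∈ s, f i w) z = ∑ i ∈ s, wd (f i) z := by
  simp only [wd, fderiv_fun_sum hf, _root_.sum_apply, Finset.mul_sum,
    ← Finset.sum_sub_distrib]

lemma wdbar_sum {ι : Type*} (s : Finset ι) {f : ι → ℂ → ℂ}
    (hf : ∀ i ∈ s, DifferentiableAt ℝ (f i) z) :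
    wdbar (fun w => ∑ i ∈ s, f i w) z = ∑ i ∈ s, wdbar (f i) z := by
  simp only [wdbar, fderiv_fun_sum hf, _root_.sum_apply, Finset.mul_sum,
    ← Finset.sum_add_distrib]

lemma fderiv_real_apply (hf : DifferentiableAt ℂ f z) (v : ℂ) :
    fderiv ℝ f z v = v * deriv f z := by
  rw [hf.fderiv_restrictScalars ℝ, ContinuousLinearMap.coe_restrictScalars',
    fderiv_eq_smul_deriv, smul_eq_mul]

lemma wd_of_holo (hf : DifferentiableAt ℂ f z) : wd f z = deriv f z := by
  rw [wd, fderiv_real_apply hf, fderiv_real_apply hf]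
  linear_combination (-(1 / 2) * deriv f z) * Complex.I_mul_I

lemma wdbar_of_holo (hf : DifferentiableAt ℂ f z) : wdbar f z = 0 := by
  rw [wdbar, fderiv_real_apply hf, fderiv_real_apply hf]
  linear_combination ((1 / 2) * deriv f z) * Complex.I_mul_I

lemma hasFDerivAt_of_antiholo (hf : DifferentiableAt ℂ (fun w => (starRingEnd ℂ) (f w)) z) :
    HasFDerivAt f ((Complex.conjCLE : ℂ →L[ℝ] ℂ).comp
      (fderiv ℝ (fun w => (starRingEnd ℂ) (f w)) z)) z := by
  have h1 := (hf.restrictScalars ℝ).hasFDerivAt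
  have h2 := (Complex.conjCLE : ℂ →L[ℝ] ℂ).hasFDerivAt.comp z h1
  refine h2.congr_of_eventuallyEq (Filter.Eventually.of_forall fun w => ?_)
  simp

lemma wd_of_antiholo (hf : DifferentiableAt ℂ (fun w => (starRingEnd ℂ) (f w)) z) :
    wd f z = 0 := by
  rw [wd, (hasFDerivAt_of_antiholo hf).fderiv]
  simp only [ContinuousLinearMap.comp_apply, fderiv_real_apply hf]
  simp only [ContinuousLinearEquiv.coe_coe, Complex.conjCLE_apply, map_mul, map_one, Complex.conj_I]
  linear_combination ((1 / 2) *
    (starRingEnd ℂ) (deriv (fun w => (starRingEnd ℂ) (f w)) z)) * Complex.I_mul_I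

lemma contDiffOn_fderiv_apply (hΩ : IsOpen Ω) (hf : ContDiffOn ℝ (⊤ : ℕ∞) f Ω) (v : ℂ) :
    ContDiffOn ℝ (⊤ : ℕ∞) (fun z => fderiv ℝ f z v) Ω :=
  (hf.fderiv_of_isOpen hΩ (by exact_mod_cast le_top)).clm_apply contDiffOn_const

lemma contDiffOn_wd (hΩ : IsOpen Ω) (hf : ContDiffOn ℝ (⊤ : ℕ∞) f Ω) :
    ContDiffOn ℝ (⊤ : ℕ∞) (wd f) Ω :=
  contDiffOn_const.mul ((contDiffOn_fderiv_apply hΩ hf 1).sub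
    (contDiffOn_const.mul (contDiffOn_fderiv_apply hΩ hf Complex.I)))

lemma contDiffOn_wdbar (hΩ : IsOpen Ω) (hf : ContDiffOn ℝ (⊤ : ℕ∞) f Ω) :
    ContDiffOn ℝ (⊤ : ℕ∞) (wdbar f) Ω :=
  contDiffOn_const.mul ((contDiffOn_fderiv_apply hΩ hf 1).add
    (contDiffOn_const.mul (contDiffOn_fderiv_apply hΩ hf Complex.I)))

end Scalar

/-! ### Matrix-valued functions: product rules and smoothness -/

section MatrixValued

variable {n : ℕ} {Ω : Set ℂ} {z : ℂ} {F G : ℂ → Matrix (Fin n) (Fin n) ℂ}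

lemma mwd_mul (hF : ∀ i j, DifferentiableAt ℝ (fun w => F w i j) z)
    (hG : ∀ i j, DifferentiableAt ℝ (fun w => G w i j) z) :
    mwd (fun w => F w * G w) z = mwd F z * G z + F z * mwd G z := by
  ext i j
  simp only [mwd, Matrix.add_apply, Matrix.mul_apply, Matrix.of_apply]
  rw [wd_sum _ fun k _ => (hF i k).fun_mul (hG k j), ← Finset.sum_add_distrib]
  exact Finset.sum_congr rfl fun k _ => wd_mul (hF i k) (hG k j)

lemma mwdbar_mul (hF : ∀ i j, DifferentiableAt ℝ (fun w => F w i j) z)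
    (hG : ∀ i j, DifferentiableAt ℝ (fun w => G w i j) z) :
    mwdbar (fun w => F w * G w) z = mwdbar F z * G z + F z * mwdbar G z := by
  ext i j
  simp only [mwdbar, Matrix.add_apply, Matrix.mul_apply, Matrix.of_apply]
  rw [wdbar_sum _ fun k _ => (hF i k).fun_mul (hG k j), ← Finset.sum_add_distrib]
  exact Finset.sum_congr rfl fun k _ => wdbar_mul (hF i k) (hG k j)

lemma mwdbar_add (hF : ∀ i j, DifferentiableAt ℝ (fun w => F w i j) z)
    (hG : ∀ i j, DifferentiableAt ℝ (fun w => G w i j) z) :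
    mwdbar (fun w => F w + G w) z = mwdbar F z + mwdbar G z := by
  ext i j
  exact wdbar_add (hF i j) (hG i j)

lemma mwd_congr (hΩ : IsOpen Ω) (h : ∀ w ∈ Ω, F w = G w) (hz : z ∈ Ω) : mwd F z = mwd G z := by
  ext i j
  have he : (fun w => F w i j) =ᶠ[nhds z] fun w => G w i j :=
    Filter.eventually_of_mem (hΩ.mem_nhds hz) fun w hw => by simp only [h w hw]
  simp only [mwd, Matrix.of_apply, wd, he.fderiv_eq]

lemma mwdbar_congr (hΩ : IsOpen Ω) (h : ∀ w ∈ Ω, F w = G w) (hz : z ∈ Ω) :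
    mwdbar F z = mwdbar G z := by
  ext i j
  have he : (fun w => F w i j) =ᶠ[nhds z] fun w => G w i j :=
    Filter.eventually_of_mem (hΩ.mem_nhds hz) fun w hw => by simp only [h w hw]
  simp only [mwdbar, Matrix.of_apply, wdbar, he.fderiv_eq]

namespace MSmooth

lemma differentiableAt (hF : MSmooth Ω F) (hΩ : IsOpen Ω) (hz : z ∈ Ω) (i j : Fin n) :
    DifferentiableAt ℝ (fun w => F w i j) z :=
  ((hF i j).contDiffAt (hΩ.mem_nhds hz)).differentiableAt (by simp)

lemma mwd (hF : MSmooth Ω F) (hΩ : IsOpen Ω) : MSmooth Ω (mwd F) :=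
  fun i j => contDiffOn_wd hΩ (hF i j)

lemma mwdbar (hF : MSmooth Ω F) (hΩ : IsOpen Ω) : MSmooth Ω (mwdbar F) :=
  fun i j => contDiffOn_wdbar hΩ (hF i j)

lemma mul (hF : MSmooth Ω F) (hG : MSmooth Ω G) : MSmooth Ω (fun w => F w * G w) := by
  intro i j
  simp only [Matrix.mul_apply]
  exact ContDiffOn.sum fun k _ => (hF i k).mul (hG k j)

lemma add (hF : MSmooth Ω F) (hG : MSmooth Ω G) : MSmooth Ω (fun w => F w + G w) :=
  fun i j => (hF i j).add (hG i j)

lemma sub (hF : MSmooth Ω F) (hG : MSmooth Ω G) : MSmooth Ω (fun w => F w - G w) :=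
  fun i j => (hF i j).sub (hG i j)

lemma neg (hF : MSmooth Ω F) : MSmooth Ω (fun w => -F w) :=
  fun i j => (hF i j).neg

lemma det (hF : MSmooth Ω F) : ContDiffOn ℝ (⊤ : ℕ∞) (fun w => (F w).det) Ω := by
  simp only [Matrix.det_apply']
  exact ContDiffOn.sum fun σ _ => contDiffOn_const.mul (contDiffOn_prod fun i _ => hF _ _)

/-- Cramer's rule expresses the entries of `F⁻¹` rationally in those of `F`. -/
lemma inv (hF : MSmooth Ω F) (hu : ∀ w ∈ Ω, IsUnit (F w)) : MSmooth Ω (fun w => (F w)⁻¹) := by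
  intro i j
  simp only [Matrix.inv_def, Ring.inverse_eq_inv', Matrix.smul_apply, smul_eq_mul,
    Matrix.adjugate_apply]
  refine (hF.det.inv fun w hw => ?_).mul (MSmooth.det fun k l => ?_)
  · exact ((Matrix.isUnit_iff_isUnit_det _).1 (hu w hw)).ne_zero
  · simp only [Matrix.updateRow_apply]
    split_ifs
    · exact contDiffOn_const
    · exact hF k l

lemma conn (hF : MSmooth Ω F) (hΩ : IsOpen Ω) (hu : ∀ w ∈ Ω, IsUnit (F w)) :
    MSmooth Ω (fun w => (F w)⁻¹ * _root_.mwd F w) :=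
  (hF.inv hu).mul (hF.mwd hΩ)

lemma covLam {h : ℂ → Matrix (Fin n) (Fin n) ℂ} (hh : MSmooth Ω h)
    (hu : ∀ w ∈ Ω, IsUnit (h w)) (hF : MSmooth Ω F) (hΩ : IsOpen Ω) : MSmooth Ω (covLam h F) :=
  (hF.mwd hΩ).add (((hh.conn hΩ hu).mul hF).sub (hF.mul (hh.conn hΩ hu)))

lemma of_holo (hΩ : IsOpen Ω) (hF : ∀ i j, DifferentiableOn ℂ (fun z => F z i j) Ω) :
    MSmooth Ω F :=
  fun i j => ((hF i j).contDiffOn hΩ).restrict_scalars ℝ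

end MSmooth

lemma mwdbar_of_holo (hΩ : IsOpen Ω) (hF : ∀ i j, DifferentiableOn ℂ (fun z => F z i j) Ω)
    (hz : z ∈ Ω) : mwdbar F z = 0 := by
  ext i j
  exact wdbar_of_holo ((hF i j).differentiableAt (hΩ.mem_nhds hz))

lemma mwd_holo (hΩ : IsOpen Ω) (hF : ∀ i j, DifferentiableOn ℂ (fun z => F z i j) Ω)
    (i j : Fin n) : DifferentiableOn ℂ (fun z => mwd F z i j) Ω :=
  ((hF i j).deriv hΩ).congr fun _ hw => wd_of_holo ((hF i j).differentiableAt (hΩ.mem_nhds hw))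

end MatrixValued

/-! ### Gauge transformation and intertwining -/

section Intertwining

variable {n : ℕ} {Ω : Set ℂ} {hT hS A B F G : ℂ → Matrix (Fin n) (Fin n) ℂ}

/-- The gauge transformation law `B θ_S = θ_T B + ∂B` for the connection matrices `θ = h⁻¹ ∂h`. -/
lemma conn_transform (hΩ : IsOpen Ω) (hTs : MSmooth Ω hT)
    (hTu : ∀ w ∈ Ω, IsUnit (hT w))
    (hA : ∀ i j, DifferentiableOn ℂ (fun z => (starRingEnd ℂ) (A z i j)) Ω)
    (hB : ∀ i j, DifferentiableOn ℂ (fun z => B z i j) Ω)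
    (hAu : ∀ w ∈ Ω, IsUnit (A w)) (hBu : ∀ w ∈ Ω, IsUnit (B w))
    (hrel : ∀ w ∈ Ω, hS w = A w * hT w * B w) {z : ℂ} (hz : z ∈ Ω) :
    B z * ((hS z)⁻¹ * mwd hS z) = ((hT z)⁻¹ * mwd hT z) * B z + mwd B z := by
  have hA' : ∀ i j, DifferentiableAt ℂ (fun z => (starRingEnd ℂ) (A z i j)) z :=
    fun i j => (hA i j).differentiableAt (hΩ.mem_nhds hz)
  have hAd : ∀ i j, DifferentiableAt ℝ (fun w => A w i j) z :=
    fun i j => (hasFDerivAt_of_antiholo (hA' i j)).differentiableAt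
  have hA0 : mwd A z = 0 := by
    ext i j
    exact wd_of_antiholo (hA' i j)
  have hTd := hTs.differentiableAt hΩ hz
  have hBd := (MSmooth.of_holo hΩ hB).differentiableAt hΩ hz
  have hATd : ∀ i j, DifferentiableAt ℝ (fun w => (A w * hT w) i j) z := by
    intro i j
    simp only [Matrix.mul_apply]
    exact DifferentiableAt.fun_sum fun k _ => (hAd i k).fun_mul (hTd k j)
  have hd : mwd hS z = A z * mwd hT z * B z + A z * hT z * mwd B z := by
    rw [mwd_congr hΩ hrel hz, mwd_mul hATd hBd, mwd_mul hAd hTd, hA0, zero_mul, zero_add]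
  have uA := (Matrix.isUnit_iff_isUnit_det _).1 (hAu z hz)
  have uB := (Matrix.isUnit_iff_isUnit_det _).1 (hBu z hz)
  have uT := (Matrix.isUnit_iff_isUnit_det _).1 (hTu z hz)
  rw [hd, hrel z hz, Matrix.mul_inv_rev, Matrix.mul_inv_rev]
  simp only [mul_add, mul_assoc]
  simp only [Matrix.mul_nonsing_inv_cancel_left _ _ uB, Matrix.nonsing_inv_mul_cancel_left _ _ uA,
    Matrix.nonsing_inv_mul_cancel_left _ _ uT]

/-- `∂̄` preserves the intertwining relation, since `∂̄B = 0`. -/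
lemma covBar_intertwine (hΩ : IsOpen Ω) (hB : ∀ i j, DifferentiableOn ℂ (fun z => B z i j) Ω)
    (hF : MSmooth Ω F) (hG : MSmooth Ω G) (h : ∀ w ∈ Ω, B w * F w = G w * B w) :
    ∀ w ∈ Ω, B w * covBar F w = covBar G w * B w := by
  intro w hw
  have hBd := (MSmooth.of_holo hΩ hB).differentiableAt hΩ hw
  have e := mwdbar_congr hΩ h hw
  rwa [mwdbar_mul hBd (hF.differentiableAt hΩ hw), mwdbar_mul (hG.differentiableAt hΩ hw) hBd,
    mwdbar_of_holo hΩ hB hw, zero_mul, zero_add, mul_zero, add_zero] at e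

/-- The covariant `λ`-derivatives preserve the intertwining relation: the `∂B` terms from the product
rule cancel against those in the transformation law of the connections. -/
lemma covLam_intertwine (hΩ : IsOpen Ω) (hB : ∀ i j, DifferentiableOn ℂ (fun z => B z i j) Ω)
    (hconn : ∀ w ∈ Ω, B w * ((hS w)⁻¹ * mwd hS w) = ((hT w)⁻¹ * mwd hT w) * B w + mwd B w)
    (hF : MSmooth Ω F) (hG : MSmooth Ω G) (h : ∀ w ∈ Ω, B w * F w = G w * B w) :
    ∀ w ∈ Ω, B w * covLam hS F w = covLam hT G w * B w := by
  intro w hw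
  have hBd := (MSmooth.of_holo hΩ hB).differentiableAt hΩ hw
  have e := mwd_congr hΩ h hw
  rw [mwd_mul hBd (hF.differentiableAt hΩ hw), mwd_mul (hG.differentiableAt hΩ hw) hBd] at e
  have c := hconn w hw
  have hw' := h w hw
  simp only [covLam]
  generalize (hS w)⁻¹ * mwd hS w = θS at *
  generalize (hT w)⁻¹ * mwd hT w = θT at *
  have e1 : B w * mwd F w = mwd G w * B w + G w * mwd B w - mwd B w * F w := by
    rw [← e]; abel
  have e2 : B w * (θS * F w) = θT * (G w * B w) + mwd B w * F w := by
    rw [← mul_assoc, c, add_mul, mul_assoc, hw']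
  have e3 : B w * (F w * θS) = G w * (θT * B w) + G w * mwd B w := by
    rw [← mul_assoc, hw', mul_assoc, c, mul_add]
  rw [mul_add, mul_sub, e1, e2, e3]
  noncomm_ring

/-- `∂̄` of the transformation law of the connections, where `∂̄∂B = 0` because `∂B` is
holomorphic. -/
lemma curvature_intertwine (hΩ : IsOpen Ω) (hB : ∀ i j, DifferentiableOn ℂ (fun z => B z i j) Ω)
    (hTs : MSmooth Ω hT) (hSs : MSmooth Ω hS)
    (hTu : ∀ w ∈ Ω, IsUnit (hT w)) (hSu : ∀ w ∈ Ω, IsUnit (hS w))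
    (hconn : ∀ w ∈ Ω, B w * ((hS w)⁻¹ * mwd hS w) = ((hT w)⁻¹ * mwd hT w) * B w + mwd B w) :
    ∀ w ∈ Ω, B w * curvature hS w = curvature hT w * B w := by
  intro w hw
  have sB := MSmooth.of_holo hΩ hB
  have sT := hTs.conn hΩ hTu
  have e := mwdbar_congr hΩ hconn hw
  rw [mwdbar_mul (sB.differentiableAt hΩ hw) ((hSs.conn hΩ hSu).differentiableAt hΩ hw),
    mwdbar_add ((sT.mul sB).differentiableAt hΩ hw) ((sB.mwd hΩ).differentiableAt hΩ hw),
    mwdbar_mul (sT.differentiableAt hΩ hw) (sB.differentiableAt hΩ hw),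
    mwdbar_of_holo hΩ hB hw, mwdbar_of_holo hΩ (mwd_holo hΩ hB) hw,
    zero_mul, zero_add, mul_zero, add_zero, add_zero] at e
  rw [curvature, curvature, mul_neg, neg_mul, e]

end Intertwining

/-- If `h_S = A h_T B` with `A` anti-holomorphic invertible and `B` holomorphic invertible,
then for all `i, j ≥ 1` the covariant partial derivatives of the curvatures satisfy
`B 𝒦_{h_S, λ^i λ̄^j} = 𝒦_{h_T, λ^i λ̄^j} B` on `Ω`. -/
theorem stmt13 {n : ℕ} (Ω : Set ℂ) (hΩ : IsOpen Ω)
    (hT hS : ℂ → Matrix (Fin n) (Fin n) ℂ)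
    (hhTsm : ∀ i j, ContDiffOn ℝ (⊤ : ℕ∞) (fun z => hT z i j) Ω)
    (hhSsm : ∀ i j, ContDiffOn ℝ (⊤ : ℕ∞) (fun z => hS z i j) Ω)
    (hhTinv : ∀ μ ∈ Ω, IsUnit (hT μ))
    (hhSinv : ∀ μ ∈ Ω, IsUnit (hS μ))
    (A B : ℂ → Matrix (Fin n) (Fin n) ℂ)
    (hAanti : ∀ i j, DifferentiableOn ℂ (fun z => (starRingEnd ℂ) (A z i j)) Ω)
    (hBhol : ∀ i j, DifferentiableOn ℂ (fun z => B z i j) Ω)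
    (hAinv : ∀ μ ∈ Ω, IsUnit (A μ))
    (hBinv : ∀ μ ∈ Ω, IsUnit (B μ))
    (hrel : ∀ μ ∈ Ω, hS μ = A μ * hT μ * B μ) :
    ∀ i j : ℕ, 1 ≤ i → 1 ≤ j → ∀ μ ∈ Ω,
      B μ * covDeriv hS i j μ = covDeriv hT i j μ * B μ := by
  have hconn : ∀ w ∈ Ω, B w * ((hS w)⁻¹ * mwd hS w) = ((hT w)⁻¹ * mwd hT w) * B w + mwd B w :=
    fun w hw => conn_transform hΩ hhTsm hhTinv hAanti hBhol hAinv hBinv hrel hw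
  have hlam : ∀ i : ℕ, MSmooth Ω ((covLam hS)^[i] (curvature hS)) ∧
      MSmooth Ω ((covLam hT)^[i] (curvature hT)) ∧
      ∀ w ∈ Ω, B w * (covLam hS)^[i] (curvature hS) w
        = (covLam hT)^[i] (curvature hT) w * B w := by
    intro i
    induction i with
    | zero =>
      exact ⟨((MSmooth.conn hhSsm hΩ hhSinv).mwdbar hΩ).neg,
        ((MSmooth.conn hhTsm hΩ hhTinv).mwdbar hΩ).neg,
        curvature_intertwine hΩ hBhol hhTsm hhSsm hhTinv hhSinv hconn⟩
    | succ i ih =>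
      obtain ⟨sF, sG, h⟩ := ih
      simp only [Function.iterate_succ_apply']
      exact ⟨MSmooth.covLam hhSsm hhSinv sF hΩ, MSmooth.covLam hhTsm hhTinv sG hΩ,
        covLam_intertwine hΩ hBhol hconn sF sG h⟩
  have hbar : ∀ i j : ℕ, MSmooth Ω (covDeriv hS i j) ∧ MSmooth Ω (covDeriv hT i j) ∧
      ∀ w ∈ Ω, B w * covDeriv hS i j w = covDeriv hT i j w * B w := by
    intro i j
    induction j with
    | zero => exact hlam i
    | succ j ih =>
      obtain ⟨sF, sG, h⟩ := ih
      simp only [covDeriv, Function.iterate_succ_apply'] at sF sG h ⊢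
      exact ⟨sF.mwdbar hΩ, sG.mwdbar hΩ, covBar_intertwine hΩ hBhol sF sG h⟩
  exact fun i j _ _ => (hbar i j).2.2
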